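/- An algebra A over a field of characteristic not 2 is a binary Leibniz algebra (every two-generated subalgebra is a left Leibniz algebra) if and only if A satisfies the identities ⟨a,a,b⟩ = 0, ⟨a,b,a⟩ = 0, and ⟨a,b,ab⟩ = 0 for all a,b ∈ A. -/

import Mathlib

/-- The Leibniz discriminant ⟨a,b,c⟩ = (ab)c - a(bc) + b(ac). -/
def leibTriple {A : Type*} [NonUnitalNonAssocRing A] (a b c : A) : A :=
  (a * b) * c - a * (b * c) + b * (a * c)

/-!
The identities make `⟨a, b, c⟩` alternating, and they pass to the dual numbers `A[ε]`. Hence, once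
`⟨u, v, w⟩ = 0` is known for right-normed words of total degree at most `n` in two arbitrary
elements `g 0, g 1` of an arbitrary such algebra, it may be applied to the elements
`g j + ε (g i) (g j)` of `A[ε]`. The coefficient of `ε` says that left multiplication by `g i` acts
on `⟨u, v, w⟩` as a derivation. Together with the linearisation of `⟨x, v, x v⟩ = 0` this gives
`⟨x, y v, w⟩ = -⟨y, x v, w⟩` in degree `n + 1`. As there are only two letters, two of the words
`x`, `v`, `w` start with the same letter, and this relation then forces `⟨x, v, w⟩ = 0`; the
derivation property reduces all triples of degree `n + 1` to such ones. Finally, the vanishing on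
words makes their span closed under multiplication, so that it contains the generated subalgebra.
-/

open scoped DualNumber

section Multilinearity

variable {A : Type*} [NonUnitalNonAssocRing A]

theorem leibTriple_add_left (a a' b c : A) :
    leibTriple (a + a') b c = leibTriple a b c + leibTriple a' b c := by
  simp only [leibTriple, add_mul, mul_add]
  abel

theorem leibTriple_add_middle (a b b' c : A) :
    leibTriple a (b + b') c = leibTriple a b c + leibTriple a b' c := by
  simp only [leibTriple, add_mul, mul_add]
  abel

theorem leibTriple_add_right (a b c c' : A) :
    leibTriple a b (c + c') = leibTriple a b c + leibTriple a b c' := by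
  simp only [leibTriple, mul_add]
  abel

theorem mul_mul_eq_sub_of_leibTriple_eq_zero {a b c : A} (h : leibTriple a b c = 0) :
    a * b * c = a * (b * c) - b * (a * c) := by
  rw [← sub_eq_zero, ← h, leibTriple]
  abel

variable {K : Type*} [Semiring K] [Module K A] [SMulCommClass K A A]

theorem leibTriple_smul_right (r : K) (a b c : A) :
    leibTriple a b (r • c) = r • leibTriple a b c := by
  simp only [leibTriple, mul_smul_comm, smul_add, smul_sub]

variable [IsScalarTower K A A]

theorem leibTriple_smul_left (r : K) (a b c : A) :
    leibTriple (r • a) b c = r • leibTriple a b c := by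
  simp only [leibTriple, smul_mul_assoc, mul_smul_comm, smul_add, smul_sub]

theorem leibTriple_smul_middle (r : K) (a b c : A) :
    leibTriple a (r • b) c = r • leibTriple a b c := by
  simp only [leibTriple, smul_mul_assoc, mul_smul_comm, smul_add, smul_sub]

theorem leibTriple_eq_zero_of_mem_span_range {κ : Type*} {f : κ → A}
    (hf : ∀ i j k, leibTriple (f i) (f j) (f k) = 0) {a b c : A}
    (ha : a ∈ Submodule.span K (Set.range f)) (hb : b ∈ Submodule.span K (Set.range f))
    (hc : c ∈ Submodule.span K (Set.range f)) : leibTriple a b c = 0 := by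
  induction ha using Submodule.span_induction with
  | mem a ha =>
    induction hb using Submodule.span_induction with
    | mem b hb =>
      induction hc using Submodule.span_induction with
      | mem c hc =>
        obtain ⟨i, rfl⟩ := ha
        obtain ⟨j, rfl⟩ := hb
        obtain ⟨k, rfl⟩ := hc
        exact hf i j k
      | zero => simp [leibTriple]
      | add c c' _ _ hc hc' => rw [leibTriple_add_right, hc, hc', add_zero]
      | smul r c _ hc => rw [leibTriple_smul_right, hc, smul_zero]
    | zero => simp [leibTriple]
    | add b b' _ _ hb hb' => rw [leibTriple_add_middle, hb, hb', add_zero]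
    | smul r b _ hb => rw [leibTriple_smul_middle, hb, smul_zero]
  | zero => simp [leibTriple]
  | add a a' _ _ ha ha' => rw [leibTriple_add_left, ha, ha', add_zero]
  | smul r a _ ha => rw [leibTriple_smul_left, ha, smul_zero]

end Multilinearity

/-- The three identities that characterise binary Leibniz algebras in the absence of 2-torsion. -/
structure BinaryLeibnizIdentities (A : Type*) [NonUnitalNonAssocRing A] : Prop where
  leibTriple_self_left (a b : A) : leibTriple a a b = 0
  leibTriple_self_outer (a b : A) : leibTriple a b a = 0
  leibTriple_mul_self (a b : A) : leibTriple a b (a * b) = 0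

namespace BinaryLeibnizIdentities

variable {A : Type*} [NonUnitalNonAssocRing A]

theorem leibTriple_swap_left (h : BinaryLeibnizIdentities A) (a b c : A) :
    leibTriple b a c = -leibTriple a b c := by
  have hab := h.leibTriple_self_left (a + b) c
  rw [leibTriple_add_left, leibTriple_add_middle, leibTriple_add_middle, h.leibTriple_self_left,
    h.leibTriple_self_left, zero_add, add_zero] at hab
  exact eq_neg_of_add_eq_zero_right hab

theorem leibTriple_swap_outer (h : BinaryLeibnizIdentities A) (a b c : A) :
    leibTriple c b a = -leibTriple a b c := by
  have hac := h.leibTriple_self_outer (a + c) b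
  rw [leibTriple_add_left, leibTriple_add_right, leibTriple_add_right, h.leibTriple_self_outer,
    h.leibTriple_self_outer, zero_add, add_zero] at hac
  exact eq_neg_of_add_eq_zero_right hac

theorem leibTriple_swap_right (h : BinaryLeibnizIdentities A) (a b c : A) :
    leibTriple a c b = -leibTriple a b c := by
  rw [h.leibTriple_swap_left c a b, h.leibTriple_swap_outer b a c, h.leibTriple_swap_left a b c,
    neg_neg]

theorem mul_add_mul_swap_mul_eq_zero (h : BinaryLeibnizIdentities A) (a b c : A) :
    (a * b + b * a) * c = 0 := by
  have hab := h.leibTriple_swap_left a b c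
  rw [eq_neg_iff_add_eq_zero] at hab
  rw [← hab, leibTriple, leibTriple, add_mul]
  abel

theorem leibTriple_mul_swap_left (h : BinaryLeibnizIdentities A) (a b c d : A) :
    leibTriple (b * a) c d = -leibTriple (a * b) c d := by
  rw [eq_neg_iff_add_eq_zero, ← leibTriple_add_left]
  simp only [leibTriple, h.mul_add_mul_swap_mul_eq_zero, zero_mul, mul_zero, sub_zero, add_zero]

theorem leibTriple_mul_self_linearize_left (h : BinaryLeibnizIdentities A) (a a' b : A) :
    leibTriple a b (a' * b) + leibTriple a' b (a * b) = 0 := by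
  have haa' := h.leibTriple_mul_self (a + a') b
  simp only [add_mul, leibTriple_add_left, leibTriple_add_right, h.leibTriple_mul_self, zero_add,
    add_zero] at haa'
  rwa [add_comm]

theorem leibTriple_mul_self_linearize_right (h : BinaryLeibnizIdentities A) (a b b' : A) :
    leibTriple a b (a * b') + leibTriple a b' (a * b) = 0 := by
  have hbb' := h.leibTriple_mul_self a (b + b')
  simp only [mul_add, leibTriple_add_middle, leibTriple_add_right, h.leibTriple_mul_self, zero_add,
    add_zero] at hbb'
  rwa [add_comm]

theorem leibTriple_mul_middle (h : BinaryLeibnizIdentities A) (x a b : A) :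
    leibTriple x (x * a) b = leibTriple x a (x * b) := by
  rw [h.leibTriple_swap_right x b (x * a), neg_eq_iff_add_eq_zero, add_comm]
  exact h.leibTriple_mul_self_linearize_right x a b

theorem leibTriple_mul_middle_linearize (h : BinaryLeibnizIdentities A) (x y a b : A) :
    leibTriple x (y * a) b + leibTriple y (x * a) b =
      leibTriple x a (y * b) + leibTriple y a (x * b) := by
  have hxy := h.leibTriple_mul_middle (x + y) a b
  simp only [add_mul, leibTriple_add_left, leibTriple_add_middle, leibTriple_add_right,
    h.leibTriple_mul_middle x a b, h.leibTriple_mul_middle y a b] at hxy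
  rw [← sub_eq_zero] at hxy ⊢
  rw [← hxy]
  abel

theorem leibTriple_mul_middle_swap_of_derivation (h : BinaryLeibnizIdentities A)
    (h2 : IsSMulRegular A (2 : ℕ)) {x y a b : A}
    (hx : leibTriple (x * y) a b + leibTriple y (x * a) b + leibTriple y a (x * b) = 0)
    (hy : leibTriple (y * x) a b + leibTriple x (y * a) b + leibTriple x a (y * b) = 0) :
    leibTriple x (y * a) b = -leibTriple y (x * a) b := by
  rw [eq_neg_iff_add_eq_zero]
  apply h2.right_eq_zero_of_smul
  rw [h.leibTriple_mul_swap_left x y] at hy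
  calc 2 • (leibTriple x (y * a) b + leibTriple y (x * a) b)
      = (leibTriple x (y * a) b + leibTriple y (x * a) b) +
          (leibTriple x a (y * b) + leibTriple y a (x * b)) := by
        rw [two_smul, ← h.leibTriple_mul_middle_linearize]
    _ = (leibTriple (x * y) a b + leibTriple y (x * a) b + leibTriple y a (x * b)) +
          (-leibTriple (x * y) a b + leibTriple x (y * a) b + leibTriple x a (y * b)) := by abel
    _ = 0 := by rw [hx, hy, add_zero]

end BinaryLeibnizIdentities

section DualNumbers

variable {A : Type*} [NonUnitalNonAssocRing A]

instance : NonUnitalNonAssocRing A[ε] where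
  zero_mul _ := by ext <;> simp
  mul_zero _ := by ext <;> simp
  left_distrib a b c := by
    ext
    · simp [mul_add]
    · simp only [TrivSqZeroExt.snd_mul, TrivSqZeroExt.fst_add, TrivSqZeroExt.snd_add,
        smul_eq_mul, op_smul_eq_mul, mul_add]
      abel
  right_distrib a b c := by
    ext
    · simp [add_mul]
    · simp only [TrivSqZeroExt.snd_mul, TrivSqZeroExt.fst_add, TrivSqZeroExt.snd_add,
        smul_eq_mul, op_smul_eq_mul, add_mul]
      abel

theorem fst_leibTriple (a b c : A[ε]) :
    (leibTriple a b c).fst = leibTriple a.fst b.fst c.fst := by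
  simp [leibTriple]

theorem snd_leibTriple (a b c : A[ε]) :
    (leibTriple a b c).snd = leibTriple a.snd b.fst c.fst + leibTriple a.fst b.snd c.fst +
      leibTriple a.fst b.fst c.snd := by
  simp only [leibTriple, TrivSqZeroExt.snd_mul, TrivSqZeroExt.fst_mul, TrivSqZeroExt.snd_add,
    TrivSqZeroExt.snd_sub, smul_eq_mul, op_smul_eq_mul, mul_add, add_mul]
  abel

theorem BinaryLeibnizIdentities.dualNumber (h : BinaryLeibnizIdentities A) :
    BinaryLeibnizIdentities A[ε] where
  leibTriple_self_left a b := by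
    ext
    · rw [fst_leibTriple, h.leibTriple_self_left, TrivSqZeroExt.fst_zero]
    · rw [snd_leibTriple, h.leibTriple_self_left, h.leibTriple_swap_left a.fst a.snd,
        add_zero, neg_add_cancel, TrivSqZeroExt.snd_zero]
  leibTriple_self_outer a b := by
    ext
    · rw [fst_leibTriple, h.leibTriple_self_outer, TrivSqZeroExt.fst_zero]
    · rw [snd_leibTriple, h.leibTriple_self_outer, h.leibTriple_swap_outer a.fst _ a.snd,
        add_zero, neg_add_cancel, TrivSqZeroExt.snd_zero]
  leibTriple_mul_self a b := by
    ext
    · rw [fst_leibTriple, TrivSqZeroExt.fst_mul, h.leibTriple_mul_self, TrivSqZeroExt.fst_zero]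
    · have ha := h.leibTriple_mul_self_linearize_left a.snd a.fst b.fst
      have hb := h.leibTriple_mul_self_linearize_right a.fst b.snd b.fst
      calc (leibTriple a b (a * b)).snd
          = (leibTriple a.snd b.fst (a.fst * b.fst) + leibTriple a.fst b.fst (a.snd * b.fst)) +
              (leibTriple a.fst b.snd (a.fst * b.fst) +
                leibTriple a.fst b.fst (a.fst * b.snd)) := by
            rw [snd_leibTriple, TrivSqZeroExt.fst_mul, TrivSqZeroExt.snd_mul, smul_eq_mul,
              op_smul_eq_mul, leibTriple_add_right]
            abel
        _ = 0 := by rw [ha, hb, add_zero]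

theorem isSMulRegular_dualNumber {R : Type*} [SMul R A] {r : R} (hr : IsSMulRegular A r) :
    IsSMulRegular A[ε] r :=
  Prod.isSMulRegular_iff.mpr ⟨hr, hr⟩

end DualNumbers

/-- Nonempty words in the alphabet `ι`, read as right-normed products
`i₁ (i₂ (⋯ (iₙ₋₁ iₙ)))`. -/
inductive RightNormedWord (ι : Type*)
  | of (i : ι) : RightNormedWord ι
  | cons (i : ι) (w : RightNormedWord ι) : RightNormedWord ι

namespace RightNormedWord

variable {ι A : Type*}

/-- The number of letters of a word. -/
def degree : RightNormedWord ι → ℕ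
  | of _ => 1
  | cons _ w => w.degree + 1

/-- The first letter of a word. -/
def head : RightNormedWord ι → ι
  | of i => i
  | cons i _ => i

theorem degree_pos (w : RightNormedWord ι) : 0 < w.degree := by
  cases w <;> simp [degree]

variable [NonUnitalNonAssocRing A]

/-- The value of a word under the substitution `g` of elements of `A` for the letters. -/
def eval (g : ι → A) : RightNormedWord ι → A
  | of i => g i
  | cons i w => g i * w.eval g

/-- The discriminant vanishes on words in the elements `g i` of total degree at most `n`. -/
def LeibnizUpTo (g : ι → A) (n : ℕ) : Prop :=
  ∀ u v w : RightNormedWord ι, u.degree + v.degree + w.degree ≤ n →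
    leibTriple (u.eval g) (v.eval g) (w.eval g) = 0

/-- The elements `g j` moved infinitesimally along left multiplication by `g i`. -/
def deform (g : ι → A) (i j : ι) : A[ε] :=
  TrivSqZeroExt.inl (g j) + TrivSqZeroExt.inr (g i * g j)

theorem fst_deform (g : ι → A) (i j : ι) : (deform g i j).fst = g j := by
  simp [deform]

theorem snd_deform (g : ι → A) (i j : ι) : (deform g i j).snd = g i * g j := by
  simp [deform]

theorem fst_eval_deform (g : ι → A) (i : ι) (w : RightNormedWord ι) :
    (w.eval (deform g i)).fst = w.eval g := by
  induction w with
  | of j => exact fst_deform g i j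
  | cons j w ih => rw [eval, eval, TrivSqZeroExt.fst_mul, ih, fst_deform]

theorem snd_eval_deform {g : ι → A} {n : ℕ} (hg : LeibnizUpTo g n) (i : ι)
    (w : RightNormedWord ι) (hw : w.degree < n) :
    (w.eval (deform g i)).snd = g i * w.eval g := by
  induction w with
  | of j => exact snd_deform g i j
  | cons j w ih =>
    rw [degree] at hw
    have hij : leibTriple (g i) (g j) (w.eval g) = 0 :=
      hg (of i) (of j) w (by simp only [degree]; lia)
    rw [eval, eval, TrivSqZeroExt.snd_mul, smul_eq_mul, op_smul_eq_mul, ih (by lia), fst_deform,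
      snd_deform, fst_eval_deform, mul_mul_eq_sub_of_leibTriple_eq_zero hij, add_sub_cancel]

theorem leibTriple_eval_derivation {g : ι → A} {n : ℕ} (hg : LeibnizUpTo g n) {i : ι}
    (hdef : LeibnizUpTo (deform g i) n) {u v w : RightNormedWord ι}
    (huvw : u.degree + v.degree + w.degree ≤ n) :
    leibTriple (g i * u.eval g) (v.eval g) (w.eval g) +
      leibTriple (u.eval g) (g i * v.eval g) (w.eval g) +
      leibTriple (u.eval g) (v.eval g) (g i * w.eval g) = 0 := by
  have hu := u.degree_pos
  have hv := v.degree_pos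
  have hw := w.degree_pos
  have hε := congrArg TrivSqZeroExt.snd (hdef u v w huvw)
  simpa only [snd_leibTriple, fst_eval_deform, snd_eval_deform hg i u (by lia),
    snd_eval_deform hg i v (by lia), snd_eval_deform hg i w (by lia),
    TrivSqZeroExt.snd_zero] using hε

section InductionStep

variable {g : ι → A} {n : ℕ}

theorem leibTriple_gen_mul_swap (h : BinaryLeibnizIdentities A) (h2 : IsSMulRegular A (2 : ℕ))
    (hg : LeibnizUpTo g n) (hdef : ∀ i, LeibnizUpTo (deform g i) n) (i j : ι)
    {v w : RightNormedWord ι} (hvw : v.degree + w.degree < n) :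
    leibTriple (g i) (g j * v.eval g) (w.eval g) =
      -leibTriple (g j) (g i * v.eval g) (w.eval g) :=
  h.leibTriple_mul_middle_swap_of_derivation h2
    (leibTriple_eval_derivation hg (hdef i) (u := of j) (by simp only [degree]; lia))
    (leibTriple_eval_derivation hg (hdef j) (u := of i) (by simp only [degree]; lia))

theorem leibTriple_head_middle_eq_zero (h : BinaryLeibnizIdentities A)
    (h2 : IsSMulRegular A (2 : ℕ)) (hg : LeibnizUpTo g n)
    (hdef : ∀ i, LeibnizUpTo (deform g i) n) {v w : RightNormedWord ι}
    (hvw : v.degree + w.degree ≤ n) :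
    leibTriple (g v.head) (v.eval g) (w.eval g) = 0 := by
  cases v with
  | of i => exact h.leibTriple_self_left _ _
  | cons i v =>
    rw [degree] at hvw
    apply h2.right_eq_zero_of_smul
    rw [two_smul, ← eq_neg_iff_add_eq_zero]
    exact leibTriple_gen_mul_swap h h2 hg hdef i i (by lia)

theorem leibTriple_head_right_eq_zero (h : BinaryLeibnizIdentities A)
    (h2 : IsSMulRegular A (2 : ℕ)) (hg : LeibnizUpTo g n)
    (hdef : ∀ i, LeibnizUpTo (deform g i) n) {v w : RightNormedWord ι}
    (hvw : v.degree + w.degree ≤ n) :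
    leibTriple (g w.head) (v.eval g) (w.eval g) = 0 := by
  rw [h.leibTriple_swap_right, leibTriple_head_middle_eq_zero h h2 hg hdef (by lia), neg_zero]

theorem leibTriple_eq_zero_of_head_eq_head (h : BinaryLeibnizIdentities A)
    (h2 : IsSMulRegular A (2 : ℕ)) (hg : LeibnizUpTo g n)
    (hdef : ∀ i, LeibnizUpTo (deform g i) n) (i : ι) {v w : RightNormedWord ι}
    (hvw : v.degree + w.degree ≤ n) (hhead : v.head = w.head) :
    leibTriple (g i) (v.eval g) (w.eval g) = 0 := by
  -- Both kinds of `v` allow exchanging `i` with the first letter of `v`, which is that of `w`.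
  cases v with
  | of j =>
    obtain rfl : j = w.head := hhead
    rw [eval, h.leibTriple_swap_left, neg_eq_zero]
    exact leibTriple_head_right_eq_zero h h2 hg hdef (v := of i) hvw
  | cons j v =>
    obtain rfl : j = w.head := hhead
    rw [degree] at hvw
    rw [eval, leibTriple_gen_mul_swap h h2 hg hdef _ _ (by lia), neg_eq_zero]
    exact leibTriple_head_right_eq_zero h h2 hg hdef (v := cons i v) hvw

end InductionStep

theorem leibTriple_gen_left_eq_zero {g : Fin 2 → A} {n : ℕ} (h : BinaryLeibnizIdentities A)
    (h2 : IsSMulRegular A (2 : ℕ)) (hg : LeibnizUpTo g n)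
    (hdef : ∀ i, LeibnizUpTo (deform g i) n) (i : Fin 2) {v w : RightNormedWord (Fin 2)}
    (hvw : v.degree + w.degree ≤ n) :
    leibTriple (g i) (v.eval g) (w.eval g) = 0 := by
  have pigeonhole : i = v.head ∨ i = w.head ∨ v.head = w.head := by lia
  rcases pigeonhole with rfl | rfl | hhead
  · exact leibTriple_head_middle_eq_zero h h2 hg hdef hvw
  · exact leibTriple_head_right_eq_zero h h2 hg hdef hvw
  · exact leibTriple_eq_zero_of_head_eq_head h h2 hg hdef i hvw hhead

theorem LeibnizUpTo.succ {g : Fin 2 → A} {n : ℕ} (hg : LeibnizUpTo g n)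
    (h : BinaryLeibnizIdentities A) (h2 : IsSMulRegular A (2 : ℕ))
    (hdef : ∀ i, LeibnizUpTo (deform g i) n) : LeibnizUpTo g (n + 1) := by
  intro u
  induction u with
  | of i =>
    intro v w huvw
    rw [degree] at huvw
    exact leibTriple_gen_left_eq_zero h h2 hg hdef i (by lia)
  | cons i u ih =>
    intro v w huvw
    rw [degree] at huvw
    have hderiv := leibTriple_eval_derivation hg (hdef i) (u := u) (v := v) (w := w) (by lia)
    have hv : leibTriple (u.eval g) (g i * v.eval g) (w.eval g) = 0 :=
      ih (cons i v) w (by rw [degree]; lia)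
    have hw : leibTriple (u.eval g) (v.eval g) (g i * w.eval g) = 0 :=
      ih v (cons i w) (by rw [degree]; lia)
    rwa [hv, hw, add_zero, add_zero] at hderiv

theorem leibnizUpTo_of_binaryLeibnizIdentities (n : ℕ) {A : Type*} [NonUnitalNonAssocRing A]
    (h : BinaryLeibnizIdentities A) (h2 : IsSMulRegular A (2 : ℕ)) (g : Fin 2 → A) :
    LeibnizUpTo g n := by
  induction n generalizing A with
  | zero =>
    intro u v w huvw
    have hu := u.degree_pos
    lia
  | succ n ih =>
    exact (ih h h2 g).succ h h2 fun i ↦ ih h.dualNumber (isSMulRegular_dualNumber h2) (deform g i)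

section Span

variable {K : Type*} [CommRing K] [Module K A] [SMulCommClass K A A]

theorem gen_mul_mem_span_range_eval (g : ι → A) (i : ι) {b : A}
    (hb : b ∈ Submodule.span K (Set.range (eval g))) :
    g i * b ∈ Submodule.span K (Set.range (eval g)) := by
  induction hb using Submodule.span_induction with
  | mem b hb =>
    obtain ⟨w, rfl⟩ := hb
    exact Submodule.subset_span ⟨cons i w, rfl⟩
  | zero => rw [mul_zero]; exact zero_mem _
  | add b b' _ _ hb hb' => rw [mul_add]; exact add_mem hb hb'
  | smul r b _ hb => rw [mul_smul_comm]; exact Submodule.smul_mem _ r hb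

variable [IsScalarTower K A A] {g : ι → A}

theorem eval_mul_mem_span_range_eval
    (hg : ∀ u v w : RightNormedWord ι, leibTriple (u.eval g) (v.eval g) (w.eval g) = 0)
    (u : RightNormedWord ι) {b : A} (hb : b ∈ Submodule.span K (Set.range (eval g))) :
    u.eval g * b ∈ Submodule.span K (Set.range (eval g)) := by
  induction u generalizing b with
  | of i => exact gen_mul_mem_span_range_eval g i hb
  | cons i u ih =>
    have hiub : leibTriple (g i) (u.eval g) b = 0 :=
      leibTriple_eq_zero_of_mem_span_range hg (Submodule.subset_span ⟨of i, rfl⟩)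
        (Submodule.subset_span ⟨u, rfl⟩) hb
    rw [eval, mul_mul_eq_sub_of_leibTriple_eq_zero hiub]
    exact sub_mem (gen_mul_mem_span_range_eval g i (ih hb))
      (ih (gen_mul_mem_span_range_eval g i hb))

theorem mul_mem_span_range_eval
    (hg : ∀ u v w : RightNormedWord ι, leibTriple (u.eval g) (v.eval g) (w.eval g) = 0) {a b : A}
    (ha : a ∈ Submodule.span K (Set.range (eval g)))
    (hb : b ∈ Submodule.span K (Set.range (eval g))) :
    a * b ∈ Submodule.span K (Set.range (eval g)) := by
  induction ha using Submodule.span_induction with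
  | mem a ha =>
    obtain ⟨u, rfl⟩ := ha
    exact eval_mul_mem_span_range_eval hg u hb
  | zero => rw [zero_mul]; exact zero_mem _
  | add a a' _ _ ha ha' => rw [add_mul]; exact add_mem ha ha'
  | smul r a _ ha => rw [smul_mul_assoc]; exact Submodule.smul_mem _ r ha

theorem adjoin_range_le_span_range_eval
    (hg : ∀ u v w : RightNormedWord ι, leibTriple (u.eval g) (v.eval g) (w.eval g) = 0) :
    (NonUnitalAlgebra.adjoin K (Set.range g)).toSubmodule ≤
      Submodule.span K (Set.range (eval g)) := by
  intro a ha
  induction ha using NonUnitalAlgebra.adjoin_induction with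
  | mem a ha =>
    obtain ⟨i, rfl⟩ := ha
    exact Submodule.subset_span ⟨of i, rfl⟩
  | add a b _ _ ha hb => exact add_mem ha hb
  | zero => exact zero_mem _
  | mul a b _ _ ha hb => exact mul_mem_span_range_eval hg ha hb
  | smul r a _ ha => exact Submodule.smul_mem _ r ha

end Span

end RightNormedWord

theorem stmt_2_general {K A : Type*} [CommRing K] [NonUnitalNonAssocRing A] [Module K A]
    [SMulCommClass K A A] [IsScalarTower K A A] (h2 : IsSMulRegular A (2 : ℕ)) :
    (∀ x y : A, ∀ a ∈ NonUnitalAlgebra.adjoin K ({x, y} : Set A),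
      ∀ b ∈ NonUnitalAlgebra.adjoin K ({x, y} : Set A),
      ∀ c ∈ NonUnitalAlgebra.adjoin K ({x, y} : Set A), leibTriple a b c = 0) ↔
    (∀ a b : A, leibTriple a a b = 0 ∧ leibTriple a b a = 0 ∧
      leibTriple a b (a * b) = 0) := by
  constructor
  · intro hleib a b
    have ha : a ∈ NonUnitalAlgebra.adjoin K {a, b} := NonUnitalAlgebra.subset_adjoin K (by simp)
    have hb : b ∈ NonUnitalAlgebra.adjoin K {a, b} := NonUnitalAlgebra.subset_adjoin K (by simp)
    exact ⟨hleib a b a ha a ha b hb, hleib a b a ha b hb a ha,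
      hleib a b a ha b hb _ (mul_mem ha hb)⟩
  · intro hid x y a ha b hb c hc
    have h : BinaryLeibnizIdentities A :=
      ⟨fun a b ↦ (hid a b).1, fun a b ↦ (hid a b).2.1, fun a b ↦ (hid a b).2.2⟩
    have hwords (u v w : RightNormedWord (Fin 2)) :
        leibTriple (u.eval ![x, y]) (v.eval ![x, y]) (w.eval ![x, y]) = 0 :=
      RightNormedWord.leibnizUpTo_of_binaryLeibnizIdentities _ h h2 _ u v w le_rfl
    have hspan := RightNormedWord.adjoin_range_le_span_range_eval (K := K) hwords
    rw [Matrix.range_cons_cons_empty] at hspan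
    exact leibTriple_eq_zero_of_mem_span_range hwords (hspan ha) (hspan hb) (hspan hc)

theorem stmt_2 {K A : Type*} [Field K] [NonUnitalNonAssocRing A] [Module K A]
    [SMulCommClass K A A] [IsScalarTower K A A] (hchar : (2 : K) ≠ 0) :
    (∀ x y : A, ∀ a ∈ NonUnitalAlgebra.adjoin K ({x, y} : Set A),
      ∀ b ∈ NonUnitalAlgebra.adjoin K ({x, y} : Set A),
      ∀ c ∈ NonUnitalAlgebra.adjoin K ({x, y} : Set A), leibTriple a b c = 0) ↔
    (∀ a b : A, leibTriple a a b = 0 ∧ leibTriple a b a = 0 ∧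
      leibTriple a b (a * b) = 0) := by
  have h2 : IsSMulRegular A (2 : K) := .of_ne_zero hchar
  exact stmt_2_general fun a b hab ↦ h2 (by simpa only [two_smul] using hab)
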